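/- arXiv:2406.02516 — 6 statements merged into one kernel-verified Lean document; each statement's English description precedes it below -/
import Mathlib

section
/- Let A be a symmetric linear endomorphism of a 3-dimensional real inner product space with trace zero (i.e. tr A = 0 and ⟪A x, y⟫ = ⟪x, A y⟫ for all x, y). Then for every unit vector v one has ‖A‖² ≥ (3/2)·‖A v‖², where ‖A‖² = ∑ᵢ ‖A eᵢ‖² denotes the squared Frobenius (Hilbert–Schmidt) norm computed in any orthonormal basis (e₁, e₂, e₃). -/
open RealInnerProductSpace

/-- A symmetric trace-free endomorphism `A` of a 3-dimensional real inner product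
space satisfies the refined Kato-type inequality `‖A‖² ≥ (3/2)‖A v‖²` for every unit
vector `v`, where `‖A‖²` is the squared Frobenius norm computed in any orthonormal
basis. -/
theorem stmt_0 (V : Type*) [NormedAddCommGroup V] [InnerProductSpace ℝ V]
    [FiniteDimensional ℝ V] (hdim : Module.finrank ℝ V = 3)
    (A : V →ₗ[ℝ] V)
    (hsymm : ∀ x y : V, ⟪A x, y⟫ = ⟪x, A y⟫)
    (htr : LinearMap.trace ℝ V A = 0)
    (b : OrthonormalBasis (Fin 3) ℝ V)
    (v : V) (hv : ‖v‖ = 1) :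
    (3/2) * ‖A v‖ ^ 2 ≤ ∑ i : Fin 3, ‖A (b i)‖ ^ 2 := by
  have hS : A.IsSymmetric := hsymm
  set e := hS.eigenvectorBasis hdim with he
  set l := hS.eigenvalues hdim with hl
  have hA : ∀ j, A (e j) = l j • e j := fun j => by
    exact hS.apply_eigenvectorBasis hdim j
  have hn : ∀ w : V, ‖A w‖ ^ 2 = ∑ j, l j ^ 2 * ⟪e j, w⟫ ^ 2 := fun w => by
    rw [← e.sum_sq_norm_inner_right (A w)]
    refine Finset.sum_congr rfl fun j _ => ?_
    rw [← hsymm, hA, real_inner_smul_left, Real.norm_eq_abs, sq_abs, mul_pow]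
  have hone : ∀ j, ∑ i, ⟪e j, b i⟫ ^ 2 = 1 := fun j => by
    have h := b.sum_sq_norm_inner_left (e j)
    simpa [Real.norm_eq_abs, sq_abs] using h
  have hF : ∑ i, ‖A (b i)‖ ^ 2 = ∑ j, l j ^ 2 := by
    simp_rw [hn]
    rw [Finset.sum_comm]
    simp_rw [← Finset.mul_sum, hone, mul_one]
  have ht : ∑ j, l j = 0 := by
    rw [LinearMap.trace_eq_sum_inner A e] at htr
    simpa [hA, real_inner_smul_right] using htr
  have hv1 : ∑ j, ⟪e j, v⟫ ^ 2 = 1 := by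
    have h := e.sum_sq_norm_inner_right v
    simpa [Real.norm_eq_abs, sq_abs, hv] using h
  rw [hF, hn]
  have key : ∀ j, 3 / 2 * l j ^ 2 ≤ ∑ k, l k ^ 2 := by
    rw [Fin.sum_univ_three] at ht ⊢
    intro j
    have h0 : l 0 = - l 1 - l 2 := by linarith
    fin_cases j <;> simp only [Fin.zero_eta, Fin.mk_one, Fin.reduceFinMk, h0]
    · nlinarith [sq_nonneg (l 1 - l 2)]
    · nlinarith [sq_nonneg (l 1 + 2 * l 2)]
    · nlinarith [sq_nonneg (l 2 + 2 * l 1)]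
  calc 3 / 2 * ∑ j, l j ^ 2 * ⟪e j, v⟫ ^ 2
      = ∑ j, (3 / 2 * l j ^ 2) * ⟪e j, v⟫ ^ 2 := by
        rw [Finset.mul_sum]; simp_rw [mul_assoc]
    _ ≤ ∑ j, (∑ k, l k ^ 2) * ⟪e j, v⟫ ^ 2 :=
        Finset.sum_le_sum fun j _ => mul_le_mul_of_nonneg_right (key j) (sq_nonneg _)
    _ = ∑ k, l k ^ 2 := by rw [← Finset.mul_sum, hv1, mul_one]
end

section
/- Let U be an open subset of the Euclidean space ℝ³ (EuclideanSpace ℝ (Fin 3)) and let f : ℝ³ → ℝ be twice continuously differentiable on U and harmonic on U, i.e. the trace of its Hessian vanishes at every point of U. Then at every point x ∈ U where the gradient ∇f(x) ≠ 0, the function x ↦ ‖∇f(x)‖ is differentiable and its gradient satisfies ‖∇‖∇f‖(x)‖² ≤ (2/3)·‖Hess f(x)‖², where ‖Hess f(x)‖² = ∑_{i,j} (∂ᵢ∂ⱼ f(x))² is the squared Frobenius norm of the Hessian matrix of f at x. -/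
lemma kato_alg (a b c d e k p q r : ℝ) (hn : p^2+q^2+r^2 = 1) (ht : a + d + k = 0) :
    (p*a+q*b+r*c)^2 + (p*b+q*d+r*e)^2 + (p*c+q*e+r*k)^2
      ≤ (2/3) * (a^2+d^2+k^2+2*b^2+2*c^2+2*e^2) := by
  obtain ⟨u, hu⟩ : ∃ u, u = p*a+q*b+r*c := ⟨_, rfl⟩
  obtain ⟨v, hv⟩ : ∃ v, v = p*b+q*d+r*e := ⟨_, rfl⟩
  obtain ⟨w, hw⟩ : ∃ w, w = p*c+q*e+r*k := ⟨_, rfl⟩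
  obtain ⟨m, hm⟩ : ∃ m, m = p*u+q*v+r*w := ⟨_, rfl⟩
  have h1 : 0 ≤ (a - 2*p*u + m/2*p^2 + m/2)^2 + (d - 2*q*v + m/2*q^2 + m/2)^2
      + (k - 2*r*w + m/2*r^2 + m/2)^2 + 2*(b - p*v - q*u + m/2*p*q)^2
      + 2*(c - p*w - r*u + m/2*p*r)^2 + 2*(e - q*w - r*v + m/2*q*r)^2 := by positivity
  have h2 : (a - 2*p*u + m/2*p^2 + m/2)^2 + (d - 2*q*v + m/2*q^2 + m/2)^2
      + (k - 2*r*w + m/2*r^2 + m/2)^2 + 2*(b - p*v - q*u + m/2*p*q)^2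
      + 2*(c - p*w - r*u + m/2*p*r)^2 + 2*(e - q*w - r*v + m/2*q*r)^2
      = (a^2+d^2+k^2+2*b^2+2*c^2+2*e^2)
        - 4*(u*(p*a+q*b+r*c) + v*(p*b+q*d+r*e) + w*(p*c+q*e+r*k))
        + m*(p*(p*a+q*b+r*c) + q*(p*b+q*d+r*e) + r*(p*c+q*e+r*k))
        + m*(a+d+k) + 2*(p^2+q^2+r^2)*(u^2+v^2+w^2) + 2*(p*u+q*v+r*w)^2
        + m^2/4*(p^2+q^2+r^2)^2 + 3*m^2/4 - 2*m*(p^2+q^2+r^2)*(p*u+q*v+r*w)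
        - 2*m*(p*u+q*v+r*w) + m^2*(p^2+q^2+r^2)/2 := by ring
  rw [← hu, ← hv, ← hw, ht, hn, ← hm] at h2
  have h3 : (p^2+q^2+r^2)*(u^2+v^2+w^2) - (p*u+q*v+r*w)^2
      = (p*v-q*u)^2 + (p*w-r*u)^2+(q*w-r*v)^2 := by ring
  rw [hn, ← hm] at h3
  rw [← hu, ← hv, ← hw]
  nlinarith [sq_nonneg (p*v-q*u), sq_nonneg (p*w-r*u), sq_nonneg (q*w-r*v)]

lemma norm_grad_sq (g : EuclideanSpace ℝ (Fin 3) → ℝ) (y : EuclideanSpace ℝ (Fin 3)) :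
    ‖gradient g y‖ ^ 2 = ∑ i : Fin 3, (fderiv ℝ g y (EuclideanSpace.single i 1)) ^ 2 := by
  rw [EuclideanSpace.norm_sq_eq]
  refine Finset.sum_congr rfl fun i _ => ?_
  have : fderiv ℝ g y (EuclideanSpace.single i 1) = (gradient g y) i := by
    have h := InnerProductSpace.toDual_symm_apply (𝕜 := ℝ) (x := EuclideanSpace.single i (1:ℝ))
      (y := fderiv ℝ g y)
    rw [← h]
    rw [EuclideanSpace.inner_single_right]
    simp [gradient]
  rw [this, Real.norm_eq_abs, sq_abs]

/-- Refined Kato inequality in Euclidean 3-space: if `f` is `C²` and harmonic on an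
open set `U ⊆ ℝ³`, then at every point of `U` where the gradient of `f` does not
vanish, the function `x ↦ ‖∇f(x)‖` is differentiable and
`‖∇‖∇f‖‖² ≤ (2/3)·‖Hess f‖²`, where `‖Hess f‖²` is the squared Frobenius norm of
the Hessian matrix. -/
theorem stmt_1 (U : Set (EuclideanSpace ℝ (Fin 3))) (hU : IsOpen U)
    (f : EuclideanSpace ℝ (Fin 3) → ℝ)
    (hf : ContDiffOn ℝ 2 f U)
    (hharm : ∀ x ∈ U,
      ∑ i : Fin 3, fderiv ℝ (fun y => fderiv ℝ f y (EuclideanSpace.single i 1)) x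
        (EuclideanSpace.single i 1) = 0) :
    ∀ x ∈ U, gradient f x ≠ 0 →
      DifferentiableAt ℝ (fun y => ‖gradient f y‖) x ∧
      ‖gradient (fun y => ‖gradient f y‖) x‖ ^ 2
        ≤ (2/3) * ∑ i : Fin 3, ∑ j : Fin 3,
            (fderiv ℝ (fun y => fderiv ℝ f y (EuclideanSpace.single j 1)) x
              (EuclideanSpace.single i 1)) ^ 2 := by
  intro x hx hgx
  have hfx : ContDiffAt ℝ 2 f x := hf.contDiffAt (hU.mem_nhds hx)
  have hd : DifferentiableAt ℝ (fderiv ℝ f) x :=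
    (hfx.fderiv_right (m := 1) (by norm_num)).differentiableAt (by norm_num)
  have hsymm : IsSymmSndFDerivAt ℝ f x := hfx.isSymmSndFDerivAt (by simp)
  have hu : ∀ v, HasFDerivAt (fun y => fderiv ℝ f y v) ((fderiv ℝ (fderiv ℝ f) x).flip v) x := by
    intro v
    have := hd.hasFDerivAt.clm_apply (hasFDerivAt_const v x)
    simpa using this
  have hH : ∀ v w, fderiv ℝ (fun y => fderiv ℝ f y v) x w = fderiv ℝ (fderiv ℝ f) x w v := by
    intro v w
    rw [(hu v).fderiv]; rfl
  have hNeq : (fun y => ‖gradient f y‖) = fun y =>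
      √(∑ i : Fin 3, (fderiv ℝ f y (EuclideanSpace.single i 1)) ^ 2) := by
    funext y
    rw [← norm_grad_sq, Real.sqrt_sq (norm_nonneg _)]
  have hpos : 0 < ‖gradient f x‖ := norm_pos_iff.mpr hgx
  have hS : HasFDerivAt (fun y => ∑ i : Fin 3, (fderiv ℝ f y (EuclideanSpace.single i 1)) ^ 2)
      (∑ i : Fin 3, (2 * fderiv ℝ f x (EuclideanSpace.single i 1)) •
        ((fderiv ℝ (fderiv ℝ f) x).flip (EuclideanSpace.single i 1))) x := by
    refine HasFDerivAt.fun_sum fun i _ => ?_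
    simpa using (hu (EuclideanSpace.single i 1)).pow 2
  have hsq := norm_grad_sq f x
  have hN := hS.sqrt (by rw [← hsq]; positivity)
  rw [← hNeq] at hN
  refine ⟨hN.differentiableAt, ?_⟩
  rw [norm_grad_sq, hN.fderiv, ← hsq, Real.sqrt_sq hpos.le]
  have hharm := hharm x hx
  simp only [hH] at hharm ⊢
  have hs : ∀ v w, fderiv ℝ (fderiv ℝ f) x v w = fderiv ℝ (fderiv ℝ f) x w v := hsymm
  generalize ‖gradient f x‖ = N at *
  simp only [Fin.sum_univ_three, smul_apply, add_apply,
    ContinuousLinearMap.flip_apply, smul_eq_mul] at hharm hsq ⊢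
  rw [hs (EuclideanSpace.single 1 1) (EuclideanSpace.single 0 1),
    hs (EuclideanSpace.single 2 1) (EuclideanSpace.single 0 1),
    hs (EuclideanSpace.single 2 1) (EuclideanSpace.single 1 1)]
  generalize fderiv ℝ f x (EuclideanSpace.single 0 1) = g0 at *
  generalize fderiv ℝ f x (EuclideanSpace.single 1 1) = g1 at *
  generalize fderiv ℝ f x (EuclideanSpace.single 2 1) = g2 at *
  have hn : (g0/N)^2 + (g1/N)^2 + (g2/N)^2 = 1 := by
    field_simp
    exact hsq.symm
  have key := kato_alg _ (fderiv ℝ (fderiv ℝ f) x (EuclideanSpace.single 0 1) (EuclideanSpace.single 1 1))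
    (fderiv ℝ (fderiv ℝ f) x (EuclideanSpace.single 0 1) (EuclideanSpace.single 2 1))
    _ (fderiv ℝ (fderiv ℝ f) x (EuclideanSpace.single 1 1) (EuclideanSpace.single 2 1))
    _ _ _ _ hn hharm
  refine le_of_eq_of_le ?_ (key.trans_eq ?_)
  · field_simp
  · ring
end

section
/- Let a be a real number with 1 ≤ a ≤ 3/2 and define u : ℝ → ℝ by u(t) = (cosh(a t))^{-1/a}. Then for every t ∈ ℝ, u''(t) + 2·tanh(a t)·u'(t) = (a − 1)·sinh(a t)²·(cosh(a t))^{-(2 + 1/a)} − a·(cosh(a t))^{-1/a}, and this quantity is ≤ −u(t). -/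
/-- Example E2 of the paper: for `1 ≤ a ≤ 3/2` and `u(t) = cosh(at)^{-1/a}`, the
Laplacian `u'' + 2 tanh(at) u'` on the warped product `ℝ × 𝕋²` equals
`(a-1) sinh²(at) cosh^{-(2+1/a)}(at) - a cosh^{-1/a}(at)` and is `≤ -u`. -/
theorem stmt_2 (a : ℝ) (ha1 : 1 ≤ a) (ha2 : a ≤ 3/2)
    (u : ℝ → ℝ) (hu : ∀ t : ℝ, u t = Real.cosh (a * t) ^ (-(1/a) : ℝ)) :
    ∀ t : ℝ,
      deriv (deriv u) t + 2 * Real.tanh (a * t) * deriv u t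
          = (a - 1) * Real.sinh (a * t) ^ 2 * Real.cosh (a * t) ^ (-(2 + 1/a) : ℝ)
            - a * Real.cosh (a * t) ^ (-(1/a) : ℝ) ∧
      deriv (deriv u) t + 2 * Real.tanh (a * t) * deriv u t ≤ -u t := by
  have ha : a ≠ 0 := by linarith
  have hc : ∀ t : ℝ, 0 < Real.cosh (a * t) := fun t => Real.cosh_pos _
  have hlin : ∀ t : ℝ, HasDerivAt (fun x : ℝ => a * x) a t := fun t => by
    simpa using (hasDerivAt_id t).const_mul a
  have hpow : ∀ p t : ℝ, HasDerivAt (fun x : ℝ => Real.cosh (a * x) ^ p)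
      (Real.sinh (a * t) * a * p * Real.cosh (a * t) ^ (p - 1)) t := fun p t =>
    ((hlin t).cosh).rpow_const (Or.inl (hc t).ne')
  have hd : deriv u = fun t => -(Real.sinh (a * t) * Real.cosh (a * t) ^ (-(1/a) - 1 : ℝ)) := by
    funext t
    rw [funext hu, (hpow _ t).deriv]
    field_simp
  intro t
  have hdd : deriv (deriv u) t = -(Real.cosh (a * t) * a * Real.cosh (a * t) ^ (-(1/a) - 1 : ℝ)
      + Real.sinh (a * t) * (Real.sinh (a * t) * a * (-(1/a) - 1)
        * Real.cosh (a * t) ^ (-(1/a) - 1 - 1 : ℝ))) := by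
    rw [hd]
    exact (((hlin t).sinh).mul (hpow _ t)).neg.deriv
  have e2 : (-(1/a) - 1 - 1 : ℝ) = -(2 + 1/a) := by ring
  have e1 : Real.cosh (a * t) ^ (-(1/a) - 1 : ℝ)
      = Real.cosh (a * t) ^ (-(2 + 1/a) : ℝ) * Real.cosh (a * t) := by
    rw [← Real.rpow_add_one (hc t).ne']
    congr 1
    ring
  have e0 : Real.cosh (a * t) ^ (-(1/a) : ℝ)
      = Real.cosh (a * t) ^ (-(2 + 1/a) : ℝ) * Real.cosh (a * t) * Real.cosh (a * t) := by
    rw [← Real.rpow_add_one (hc t).ne', ← Real.rpow_add_one (hc t).ne']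
    congr 1
    ring
  have key : deriv (deriv u) t + 2 * Real.tanh (a * t) * deriv u t
          = (a - 1) * Real.sinh (a * t) ^ 2 * Real.cosh (a * t) ^ (-(2 + 1/a) : ℝ)
            - a * Real.cosh (a * t) ^ (-(1/a) : ℝ) := by
    rw [hdd, hd, e2, e0, Real.tanh_eq_sinh_div_cosh]
    simp only [e1]
    have hP := Real.rpow_pos_of_pos (hc t) (-(2 + 1/a))
    generalize Real.cosh (a * t) ^ (-(2 + 1/a) : ℝ) = P at *
    have := (hc t).ne'
    field_simp
    ring
  refine ⟨key, ?_⟩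
  rw [key, hu, e0]
  have hP := Real.rpow_pos_of_pos (hc t) (-(2 + 1/a))
  generalize Real.cosh (a * t) ^ (-(2 + 1/a) : ℝ) = P at *
  have hs : Real.sinh (a * t) ^ 2 = Real.cosh (a * t) ^ 2 - 1 := Real.sinh_sq _
  rw [hs]
  have := mul_nonneg (sub_nonneg.2 ha1) hP.le
  nlinarith
end

section
/- Let w : [1,∞) → ℝ be a continuously differentiable function with w(r) > 0 for all r ≥ 1. Assume that for all 1 ≤ s ≤ t the integral inequality (t^{-1/4}·w'(t) + (1/4)·t^{-5/4}·w(t)) − (s^{-1/4}·w'(s) + (1/4)·s^{-5/4}·w(s)) ≥ −(5/16)·∫_s^t r^{-9/4}·w(r) dr + (3/4)·∫_s^t r^{-1/4}·(w'(r))²/w(r) dr holds. Then the function t ↦ t^{-1/4}·w'(t) − (1/8)·t^{-5/4}·w(t) is nondecreasing on [1,∞); that is, for all 1 ≤ s ≤ t, t^{-1/4}·w'(t) − (1/8)·t^{-5/4}·w(t) ≥ s^{-1/4}·w'(s) − (1/8)·s^{-5/4}·w(s). -/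
/-- Inequality (b3) of the paper with `α = ε = 1/4` implies the monotonicity (b5):
for a positive `C¹` function `w` on `[1,∞)` satisfying the integral inequality, the
quantity `t^{-1/4} w'(t) - (1/8) t^{-5/4} w(t)` is nondecreasing. -/
theorem stmt_4 (w w' : ℝ → ℝ)
    (hderiv : ∀ r ∈ Set.Ici (1:ℝ), HasDerivWithinAt w (w' r) (Set.Ici 1) r)
    (hcont : ContinuousOn w' (Set.Ici (1:ℝ)))
    (hpos : ∀ r ∈ Set.Ici (1:ℝ), 0 < w r)
    (hineq : ∀ s t : ℝ, 1 ≤ s → s ≤ t →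
      (t ^ (-(1/4) : ℝ) * w' t + (1/4) * t ^ (-(5/4) : ℝ) * w t)
          - (s ^ (-(1/4) : ℝ) * w' s + (1/4) * s ^ (-(5/4) : ℝ) * w s)
        ≥ -(5/16) * (∫ r in s..t, r ^ (-(9/4) : ℝ) * w r)
          + (3/4) * ∫ r in s..t, r ^ (-(1/4) : ℝ) * (w' r) ^ 2 / w r) :
    ∀ s t : ℝ, 1 ≤ s → s ≤ t →
      s ^ (-(1/4) : ℝ) * w' s - (1/8) * s ^ (-(5/4) : ℝ) * w s
        ≤ t ^ (-(1/4) : ℝ) * w' t - (1/8) * t ^ (-(5/4) : ℝ) * w t := by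
  intro s t hs hst
  have hsub : Set.Icc s t ⊆ Set.Ici (1:ℝ) := fun r hr => le_trans hs hr.1
  have hw : ContinuousOn w (Set.Icc s t) := fun r hr =>
    ((hderiv r (hsub hr)).continuousWithinAt).mono hsub
  have hw' : ContinuousOn w' (Set.Icc s t) := hcont.mono hsub
  have hr0 : ∀ r ∈ Set.Icc s t, 0 < r := fun r hr => lt_of_lt_of_le one_pos (hsub hr)
  have hp : ∀ a : ℝ, ContinuousOn (fun r : ℝ => r ^ a) (Set.Icc s t) := fun a r hr =>
    (Real.continuousAt_rpow_const r a (Or.inl (hr0 r hr).ne')).continuousWithinAt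
  have c1 : ContinuousOn (fun r : ℝ => r ^ (-(9/4) : ℝ) * w r) (Set.Icc s t) := (hp _).mul hw
  have c2 : ContinuousOn (fun r : ℝ => r ^ (-(1/4) : ℝ) * (w' r) ^ 2 / w r) (Set.Icc s t) :=
    ((hp _).mul (hw'.pow 2)).div hw (fun r hr => (hpos r (hsub hr)).ne')
  have c3 : ContinuousOn (fun r : ℝ => (-(5/4)) * r ^ (-(9/4) : ℝ) * w r
      + r ^ (-(5/4) : ℝ) * w' r) (Set.Icc s t) :=
    ((continuousOn_const.mul (hp _)).mul hw).add ((hp _).mul hw')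
  have i1 := c1.intervalIntegrable_of_Icc (μ := MeasureTheory.volume) hst
  have i2 := c2.intervalIntegrable_of_Icc (μ := MeasureTheory.volume) hst
  have i3 := c3.intervalIntegrable_of_Icc (μ := MeasureTheory.volume) hst
  have ftc := intervalIntegral.integral_eq_sub_of_hasDerivAt_of_le
    (f := fun r : ℝ => r ^ (-(5/4) : ℝ) * w r) hst ((hp _).mul hw) (fun r hr => by
      have hr1 : 1 < r := lt_of_le_of_lt hs hr.1
      have h1 : HasDerivAt w (w' r) r := (hderiv r hr1.le).hasDerivAt (Ici_mem_nhds hr1)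
      have h2 := Real.hasDerivAt_rpow_const (x := r) (p := (-(5/4) : ℝ))
        (Or.inl (by linarith))
      rw [show (-(5/4) : ℝ) - 1 = -(9/4) by norm_num] at h2
      exact h2.mul h1) i3
  have mono : (∫ r in s..t, (3/8) * ((-(5/4)) * r ^ (-(9/4) : ℝ) * w r
      + r ^ (-(5/4) : ℝ) * w' r)) ≤
      ∫ r in s..t, (-(5/16) * (r ^ (-(9/4) : ℝ) * w r)
        + (3/4) * (r ^ (-(1/4) : ℝ) * (w' r) ^ 2 / w r)) := by
    apply intervalIntegral.integral_mono_on hst (i3.const_mul _)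
      ((i1.const_mul _).add (i2.const_mul _))
    intro r hr
    have h0 := hr0 r hr
    have hwr := hpos r (hsub hr)
    have e1 : r ^ (-(5/4) : ℝ) = r ^ (-(9/4) : ℝ) * r := by
      rw [show (-(5/4) : ℝ) = -(9/4) + 1 by norm_num, Real.rpow_add_one h0.ne']
    have e2 : r ^ (-(1/4) : ℝ) = r ^ (-(9/4) : ℝ) * r * r := by
      rw [← e1, show (-(1/4) : ℝ) = -(5/4) + 1 by norm_num, Real.rpow_add_one h0.ne']
    have hP : 0 < r ^ (-(9/4) : ℝ) := Real.rpow_pos_of_pos h0 _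
    rw [e1, e2]
    generalize r ^ (-(9/4) : ℝ) = P at hP
    rw [← sub_nonneg]
    have : -(5/16) * (P * w r) + (3/4) * (P * r * r * (w' r) ^ 2 / w r)
        - (3/8) * ((-(5/4)) * P * w r + P * r * w' r)
        = P / w r * ((3/4) * (r * w' r - w r / 4) ^ 2 + (7/64) * (w r) ^ 2) := by
      field_simp
      ring
    rw [this]
    positivity
  rw [intervalIntegral.integral_const_mul, ftc, intervalIntegral.integral_add
    (i1.const_mul _) (i2.const_mul _), intervalIntegral.integral_const_mul,
    intervalIntegral.integral_const_mul] at mono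
  have := hineq s t hs hst
  linarith
end

section
/- Let w : (0,1) → ℝ be a continuously differentiable function with w(t) ≥ 0 for all t ∈ (0,1). Assume: (i) the function t ↦ t·w'(t) − w(t) is nondecreasing on (0,1); (ii) there exists a sequence sₙ ∈ (0,1) with sₙ → 0 and liminf_{n→∞} w'(sₙ) ≥ 0; (iii) there is a constant C > 0 with w(t) ≤ C·(1 − t) for all t ∈ (0,1). Then w(t) = 0 for all t ∈ (0,1). -/
/-- The analytic core of the final argument of Section 4 of the paper: if a
nonnegative `C¹` function `w` on `(0,1)` is such that `t w'(t) - w(t)` is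
nondecreasing, `w'(sₙ)` has nonnegative liminf along some sequence `sₙ → 0`, and
`w(t) ≤ C(1-t)`, then `w ≡ 0`. -/
theorem stmt_7 (w w' : ℝ → ℝ)
    (hderiv : ∀ t ∈ Set.Ioo (0:ℝ) 1, HasDerivAt w (w' t) t)
    (hcont : ContinuousOn w' (Set.Ioo (0:ℝ) 1))
    (hnonneg : ∀ t ∈ Set.Ioo (0:ℝ) 1, 0 ≤ w t)
    (hmono : MonotoneOn (fun t => t * w' t - w t) (Set.Ioo (0:ℝ) 1))
    (s : ℕ → ℝ) (hs : ∀ n, s n ∈ Set.Ioo (0:ℝ) 1)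
    (hs0 : Filter.Tendsto s Filter.atTop (nhds 0))
    (hliminf : ∀ ε > (0:ℝ), ∀ᶠ n in Filter.atTop, -ε ≤ w' (s n))
    (C : ℝ) (hC : 0 < C)
    (hbound : ∀ t ∈ Set.Ioo (0:ℝ) 1, w t ≤ C * (1 - t)) :
    ∀ t ∈ Set.Ioo (0:ℝ) 1, w t = 0 := by
  have hw' : ∀ a ∈ Set.Ioo (0:ℝ) 1, ∀ b ∈ Set.Ioo (0:ℝ) 1, a ≤ b → w' a ≤ w' b := by
    intro a ha b hb hab
    have hd : ∀ t ∈ Set.Icc a b, HasDerivAt (fun t => (w t + (a * w' a - w a)) / t)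
        ((w' t * t - (w t + (a * w' a - w a)) * 1) / t ^ 2) t := by
      intro t ht
      have h0 : 0 < t := lt_of_lt_of_le ha.1 ht.1
      exact ((hderiv t ⟨h0, lt_of_le_of_lt ht.2 hb.2⟩).add_const _).div (hasDerivAt_id t) h0.ne'
    have hm : MonotoneOn (fun t => (w t + (a * w' a - w a)) / t) (Set.Icc a b) := by
      apply monotoneOn_of_deriv_nonneg (convex_Icc a b)
      · intro t ht
        exact (hd t ht).continuousAt.continuousWithinAt
      · intro t ht
        exact (hd t (interior_subset ht)).differentiableAt.differentiableWithinAt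
      · intro t ht
        have ht' := interior_subset ht
        rw [(hd t ht').deriv]
        have h1 := hmono ha ⟨lt_of_lt_of_le ha.1 ht'.1, lt_of_le_of_lt ht'.2 hb.2⟩ ht'.1
        simp only at h1
        apply div_nonneg _ (sq_nonneg t)
        linarith
    have h1 := hm (Set.left_mem_Icc.2 hab) (Set.right_mem_Icc.2 hab) hab
    have h2 := hmono ha hb hab
    simp only at h1 h2
    have h3 : (w a + (a * w' a - w a)) / a = w' a := by
      have := ha.1.ne'
      field_simp
      ring
    rw [h3, le_div_iff₀ hb.1] at h1
    have hb0 := hb.1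
    by_contra hlt
    push Not at hlt
    nlinarith
  have hpos : ∀ t ∈ Set.Ioo (0:ℝ) 1, 0 ≤ w' t := by
    intro t ht
    apply le_of_forall_pos_le_add
    intro ε hε
    obtain ⟨n, h1, h2⟩ := ((hliminf ε hε).and (hs0.eventually (gt_mem_nhds ht.1))).exists
    have := hw' (s n) (hs n) t ht h2.le
    linarith
  have hwm : MonotoneOn w (Set.Ioo (0:ℝ) 1) := by
    apply monotoneOn_of_deriv_nonneg (convex_Ioo 0 1)
    · intro t ht
      exact (hderiv t ht).continuousAt.continuousWithinAt
    · intro t ht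
      exact (hderiv t (interior_subset ht)).differentiableAt.differentiableWithinAt
    · intro t ht
      rw [(hderiv t (interior_subset ht)).deriv]
      exact hpos t (interior_subset ht)
  intro t ht
  apply le_antisymm _ (hnonneg t ht)
  by_contra hlt
  push Not at hlt
  have hq : 0 < w t / (2 * C) := by positivity
  have hr : max t (1 - w t / (2 * C)) ∈ Set.Ioo (0:ℝ) 1 :=
    ⟨lt_max_of_lt_left ht.1, max_lt ht.2 (by linarith)⟩
  have h1 := hwm ht hr (le_max_left _ _)
  have h2 := hbound _ hr
  have h3 : C * (1 - max t (1 - w t / (2 * C))) ≤ C * (w t / (2 * C)) := by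
    apply mul_le_mul_of_nonneg_left _ hC.le
    have := le_max_right t (1 - w t / (2 * C))
    linarith
  have h4 : C * (w t / (2 * C)) = w t / 2 := by field_simp
  linarith
end

section
/- Let w : ℝ → ℝ be a continuously differentiable function with w(t) > 0 for all t ∈ ℝ. Assume: (i) for every twice continuously differentiable function φ : ℝ → ℝ with φ ≥ 0 and all real numbers s < t, one has (φ(t)·w'(t) − φ'(t)·w(t)) − (φ(s)·w'(s) − φ'(s)·w(s)) ≥ −∫_s^t φ''(r)·w(r) dr + (3/4)·∫_s^t φ(r)·(w'(r))²/w(r) dr; (ii) there is a constant C > 0 such that w(t) ≤ C·(1 + |t|) for all t ∈ ℝ. Then w is constant. -/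
theorem aux_nonpos (w : ℝ → ℝ) (hw : ContDiff ℝ 1 w) (hpos : ∀ t : ℝ, 0 < w t)
    (hk : ∀ s t : ℝ, s < t →
      (3/4) * (∫ r in s..t, (deriv w r) ^ 2 / w r) ≤ deriv w t - deriv w s)
    (C : ℝ) (hC : 0 < C) (hgrowth : ∀ t : ℝ, w t ≤ C * (1 + |t|)) (a : ℝ) :
    deriv w a ≤ 0 := by
  by_contra! hm
  have hd : Differentiable ℝ w := hw.differentiable (by norm_num)
  have hc : Continuous (deriv w) := hw.continuous_deriv (by norm_num)
  have hmono : ∀ s t : ℝ, s ≤ t → deriv w s ≤ deriv w t := by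
    intro s t hst
    rcases hst.eq_or_lt with rfl | hlt
    · exact le_rfl
    have h1 := hk s t hlt
    have h2 : 0 ≤ ∫ r in s..t, (deriv w r) ^ 2 / w r :=
      intervalIntegral.integral_nonneg hst
        (fun r _ => div_nonneg (sq_nonneg _) (hpos r).le)
    linarith
  have hub : ∀ t : ℝ, 1 ≤ t → deriv w t ≤ 3 * C := by
    intro t ht
    obtain ⟨c, hc1, hc2⟩ := exists_deriv_eq_slope w (show t < 2 * t by linarith)
      hd.continuous.continuousOn hd.differentiableOn
    have h1 := hmono t c hc1.1.le
    rw [hc2] at h1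
    have h2 := hgrowth (2 * t)
    rw [abs_of_pos (by linarith)] at h2
    refine h1.trans ?_
    rw [div_le_iff₀ (by linarith)]
    nlinarith [hpos t]
  set m := deriv w a with hmdef
  set δ := (3/4) * (m ^ 2 / (3 * C)) with hδ
  have hδ0 : 0 < δ := by positivity
  have hstep : ∀ s : ℝ, 1 ≤ s → a ≤ s → deriv w s + δ ≤ deriv w (2 * s) := by
    intro s hs has
    have h1 := hk s (2 * s) (by linarith)
    have h2 : (∫ r in s..(2*s), m ^ 2 / (3 * C * s)) ≤
        ∫ r in s..(2*s), (deriv w r) ^ 2 / w r := by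
      apply intervalIntegral.integral_mono_on (by linarith)
      · exact continuous_const.intervalIntegrable _ _
      · exact (Continuous.div (hc.pow 2) hd.continuous
          (fun r => (hpos r).ne')).intervalIntegrable _ _
      · intro r hr
        have h3 := hmono a r (has.trans hr.1)
        have h4 := hgrowth r
        rw [abs_of_pos (by linarith [hr.1])] at h4
        have h5 : w r ≤ 3 * C * s := by nlinarith [hr.2]
        exact div_le_div₀ (sq_nonneg _) (pow_le_pow_left₀ hm.le h3 2) (hpos r) h5
    rw [intervalIntegral.integral_const, smul_eq_mul] at h2
    have h6 : (2 * s - s) * (m ^ 2 / (3 * C * s)) = m ^ 2 / (3 * C) := by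
      have : s ≠ 0 := by positivity
      field_simp
      ring
    rw [h6] at h2
    linarith
  set b := max a 1
  have hb1 : 1 ≤ b := le_max_right _ _
  have hba : a ≤ b := le_max_left _ _
  have hit : ∀ n : ℕ, b ≤ 2 ^ n * b ∧ n * δ ≤ deriv w (2 ^ n * b) := by
    intro n
    induction n with
    | zero => simpa using hm.le.trans (hmono a b hba)
    | succ k ih =>
      have h := hstep (2 ^ k * b) (hb1.trans ih.1) (hba.trans ih.1)
      have he : (2:ℝ) ^ (k+1) * b = 2 * (2 ^ k * b) := by ring
      rw [he]
      push_cast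
      constructor <;> linarith [ih.1, ih.2]
  obtain ⟨n, hn⟩ := exists_nat_gt (3 * C / δ)
  rw [div_lt_iff₀ hδ0] at hn
  have := hub _ (hb1.trans (hit n).1)
  linarith [(hit n).2]

/-- ODE skeleton of Theorem A3 of the paper: a positive `C¹` function `w` on `ℝ`
satisfying the monotonicity inequality (b1) against every nonnegative `C²` test
function `φ`, together with the linear growth bound `w(t) ≤ C(1+|t|)`, must be
constant. -/
theorem stmt_8 (w : ℝ → ℝ) (hw : ContDiff ℝ 1 w) (hpos : ∀ t : ℝ, 0 < w t)
    (hmono : ∀ φ : ℝ → ℝ, ContDiff ℝ 2 φ → (∀ r : ℝ, 0 ≤ φ r) →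
      ∀ s t : ℝ, s < t →
        (φ t * deriv w t - deriv φ t * w t) - (φ s * deriv w s - deriv φ s * w s)
          ≥ -(∫ r in s..t, deriv (deriv φ) r * w r)
            + (3/4) * ∫ r in s..t, φ r * (deriv w r) ^ 2 / w r)
    (C : ℝ) (hC : 0 < C) (hgrowth : ∀ t : ℝ, w t ≤ C * (1 + |t|)) :
    ∀ x y : ℝ, w x = w y := by
  have hk : ∀ s t : ℝ, s < t →
      (3/4) * (∫ r in s..t, (deriv w r) ^ 2 / w r) ≤ deriv w t - deriv w s := by
    intro s t hst
    have := hmono (fun _ => 1) contDiff_const (fun _ => zero_le_one) s t hst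
    simpa using this
  have h1 := aux_nonpos w hw hpos hk C hC hgrowth
  have hdn : ∀ t, deriv (fun x => w (-x)) t = - deriv w (-t) := fun t => deriv_comp_neg w t
  have h2 := aux_nonpos (fun x => w (-x)) (hw.comp contDiff_neg) (fun t => hpos _) (by
    intro s t hst
    simp only [hdn, neg_sq]
    rw [intervalIntegral.integral_comp_neg (fun r => (deriv w r) ^ 2 / w r)]
    linarith [hk (-t) (-s) (by linarith)]) C hC (fun t => by simpa using hgrowth (-t))
  apply is_const_of_deriv_eq_zero (hw.differentiable (by norm_num))
  intro x
  have h3 := h2 (-x)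
  rw [hdn, neg_neg] at h3
  linarith [h1 x]
end
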